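/- Let G be a finite connected simple graph with toric ideal I_G ⊂ K[x_1,...,x_n]. Then G has a cycle of length 4 if and only if I_G contains a nonzero homogeneous polynomial of degree 2. -/

import Mathlib

open MvPolynomial Pointwise

/-- `ρ({i,j}) = e_i + e_j` : the 0/1 (incidence) vector of an edge. -/
noncomputable def rho {N : ℕ} (e : Sym2 (Fin N)) : Fin N → ℝ :=
  fun v => if v ∈ e then 1 else 0

/-- The edge polytope of a graph on `Fin N`. -/
noncomputable def edgePolytope {N : ℕ} (G : SimpleGraph (Fin N)) : Set (Fin N → ℝ) :=
  convexHull ℝ (rho '' G.edgeSet)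

/-- Number of lattice points of the `t`-th dilation (`= 1` for `t = 0`). -/
noncomputable def ehr {N : ℕ} (P : Set (Fin N → ℝ)) (t : ℕ) : ℕ :=
  if t = 0 then 1 else Nat.card {x : Fin N → ℤ // (fun i => (x i : ℝ)) ∈ (t : ℝ) • P}

/-- The dimension of a polytope: the rank of the direction of its affine span. -/
noncomputable def polyDim {N : ℕ} (P : Set (Fin N → ℝ)) : ℕ :=
  Module.finrank ℝ (affineSpan ℝ P).direction

/-- The `i`-th coefficient of `(1-λ)^{d+1} (1 + Σ_{t≥1} |tP ∩ Z^N| λ^t)`. -/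
noncomputable def deltaCoeff {N : ℕ} (P : Set (Fin N → ℝ)) (i : ℕ) : ℤ :=
  ∑ j ∈ Finset.range (i + 1),
    (-1 : ℤ) ^ j * (Nat.choose (polyDim P + 1) j : ℤ) * (ehr P (i - j) : ℤ)

/-- The degree of the δ-polynomial of `P`. -/
noncomputable def polyDeg {N : ℕ} (P : Set (Fin N → ℝ)) : ℕ :=
  sSup {i : ℕ | deltaCoeff P i ≠ 0}

/-- The monomial `t_i t_j s` attached to an edge `{i,j}`; `s` is the variable `none`. -/
noncomputable def edgeMonom (K : Type*) [Field K] {V : Type*} (e : Sym2 V) :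
    MvPolynomial (Option V) K :=
  Sym2.lift ⟨fun i j => X (some i) * X (some j) * X none, fun i j => by ring⟩ e

/-- The edge ring `K[G]`, the subalgebra generated by the monomials `t^{ρ(e)} s`. -/
noncomputable def edgeRing (K : Type*) [Field K] {V : Type*} (G : SimpleGraph V) :
    Subalgebra K (MvPolynomial (Option V) K) :=
  Algebra.adjoin K (edgeMonom K '' G.edgeSet)

/-- The toric ideal `I_G`: kernel of `x_e ↦ t^{ρ(e)} s`. -/
noncomputable def toricIdeal (K : Type*) [Field K] {V : Type*} (G : SimpleGraph V) :
    Ideal (MvPolynomial G.edgeSet K) :=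
  RingHom.ker (MvPolynomial.aeval (fun e : G.edgeSet => edgeMonom K (e : Sym2 V)) :
    MvPolynomial G.edgeSet K →ₐ[K] MvPolynomial (Option V) K)

/-- `S/I` has a `q`-linear (minimal graded free) resolution: there is a graded free
resolution of `S/I` in which the free module at homological step `i ≥ 1` is generated
in the single degree `q + i - 1`; equivalently all Betti numbers `β_{i,j}` with
`j ≠ q + i - 1` vanish. -/
def HasLinearResolution {σ K : Type*} [Field K] (q : ℕ)
    (I : Ideal (MvPolynomial σ K)) : Prop :=
  ∃ (b : ℕ → ℕ)
    (φ₀ : (Fin (b 0) →₀ MvPolynomial σ K) →ₗ[MvPolynomial σ K] MvPolynomial σ K)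
    (φ : ∀ i : ℕ,
      (Fin (b (i + 1)) →₀ MvPolynomial σ K) →ₗ[MvPolynomial σ K]
        (Fin (b i) →₀ MvPolynomial σ K)),
    LinearMap.range φ₀ = I ∧
    LinearMap.ker φ₀ = LinearMap.range (φ 0) ∧
    (∀ i, LinearMap.ker (φ i) = LinearMap.range (φ (i + 1))) ∧
    (∀ j, (φ₀ (Finsupp.single j 1)).IsHomogeneous q) ∧
    (∀ i j k, ((φ i (Finsupp.single j 1)) k).IsHomogeneous 1)

/-- The exponent vector of `edgeMonom`. -/
noncomputable def edgeExponent {V : Type*} (e : Sym2 V) : Option V →₀ ℕ :=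
  Sym2.lift ⟨fun i j => Finsupp.single (some i) 1 + Finsupp.single (some j) 1 +
    Finsupp.single none 1, fun i j => by simp only [add_comm (Finsupp.single (some i) 1)]⟩ e

theorem edgeMonom_eq_monomial (K : Type*) [Field K] {V : Type*} (e : Sym2 V) :
    edgeMonom K e = monomial (edgeExponent e) 1 := by
  induction e using Sym2.ind with
  | _ i j => simp [edgeMonom, edgeExponent, X, monomial_mul]

theorem edgeExponent_some {V : Type*} [DecidableEq V] (a b v : V) :
    edgeExponent s(a, b) (some v) = (if a = v then 1 else 0) + (if b = v then 1 else 0) := by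
  simp [edgeExponent, Finsupp.single_apply]

/-- An algebra homomorphism sending variables to monomials, with a nonzero polynomial in its
kernel, identifies two distinct monomials of that polynomial. -/
theorem exists_ne_mem_support_of_aeval_monomial_eq_zero {K σ τ : Type*} [Field K]
    (g : σ → τ →₀ ℕ) {f : MvPolynomial σ K} (hf : f ≠ 0)
    (h : aeval (fun i => monomial (g i) (1 : K)) f = 0) :
    ∃ m ∈ f.support, ∃ m' ∈ f.support, m ≠ m' ∧
      (m.sum fun i k => k • g i) = m'.sum fun i k => k • g i := by
  classical
  by_contra! hne
  obtain ⟨m, hm⟩ := Finset.nonempty_iff_ne_empty.mpr (mt support_eq_empty.mp hf)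
  have key : ∀ n : σ →₀ ℕ, (n.prod fun i k => monomial (g i) (1 : K) ^ k) =
      monomial (n.sum fun i k => k • g i) 1 := by
    intro n
    simp only [monomial_pow, one_pow]
    rw [monomial_finsupp_sum_index, C_1, one_mul]
  have hc := congrArg (coeff (m.sum fun i k => k • g i)) h
  rw [aeval_def, eval₂_eq, coeff_sum, coeff_zero, Finset.sum_eq_single m] at hc
  · change coeff _ (_ * m.prod fun i k => monomial (g i) (1 : K) ^ k) = 0 at hc
    rw [key, algebraMap_eq, coeff_C_mul] at hc
    simp at hc
    exact (mem_support_iff.mp hm) hc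
  · intro n hn hnm
    change coeff _ (_ * n.prod fun i k => monomial (g i) (1 : K) ^ k) = 0
    rw [key, algebraMap_eq, coeff_C_mul, coeff_monomial, if_neg (hne n hn m hm hnm), mul_zero]
  · exact fun h => absurd hm h

theorem Finsupp.exists_single_add_single_of_degree_eq_two {σ : Type*} {m : σ →₀ ℕ}
    (h : m.degree = 2) : ∃ i j, m = Finsupp.single i 1 + Finsupp.single j 1 := by
  classical
  have hc : (Finsupp.toMultiset m).card = 2 := by
    rw [Finsupp.card_toMultiset, ← h]
    rfl
  obtain ⟨i, j, hij⟩ := Multiset.card_eq_two.mp hc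
  refine ⟨i, j, Multiset.toFinsupp.symm.injective ?_⟩
  change Finsupp.toMultiset m = Finsupp.toMultiset _
  rw [hij, map_add, Finsupp.toMultiset_single, Finsupp.toMultiset_single]
  simp

theorem SimpleGraph.exists_isCycle_length_four {V : Type*} {G : SimpleGraph V} {a b c d : V}
    (hab : G.Adj a b) (hbc : G.Adj b c) (hcd : G.Adj c d) (hda : G.Adj d a)
    (hac : a ≠ c) (hbd : b ≠ d) :
    ∃ (v : V) (w : G.Walk v v), w.IsCycle ∧ w.length = 4 := by
  refine ⟨a, .cons hab (.cons hbc (.cons hcd (.cons hda .nil))), ?_, rfl⟩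
  have h1 := hab.ne
  have h2 := hbc.ne
  have h3 := hcd.ne
  have h4 := hda.ne
  simp [SimpleGraph.Walk.cons_isCycle_iff, SimpleGraph.Walk.isPath_def]
  grind

/-- Two distinct pairs of edges covering the same vertices with multiplicity form a 4-cycle. -/
theorem SimpleGraph.exists_isCycle_length_four_of_edgeExponent_add_eq {V : Type*}
    {G : SimpleGraph V} {e₁ e₂ e₃ e₄ : Sym2 V} (h₁ : e₁ ∈ G.edgeSet) (h₂ : e₂ ∈ G.edgeSet)
    (h₃ : e₃ ∈ G.edgeSet) (h₄ : e₄ ∈ G.edgeSet)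
    (h : edgeExponent e₁ + edgeExponent e₂ = edgeExponent e₃ + edgeExponent e₄)
    (hne : ¬ (e₁ = e₃ ∧ e₂ = e₄)) (hne' : ¬ (e₁ = e₄ ∧ e₂ = e₃)) :
    ∃ (v : V) (w : G.Walk v v), w.IsCycle ∧ w.length = 4 := by
  classical
  induction e₁ using Sym2.ind with | _ a b =>
  induction e₂ using Sym2.ind with | _ c d =>
  induction e₃ using Sym2.ind with | _ x y =>
  induction e₄ using Sym2.ind with | _ z w =>
  simp only [SimpleGraph.mem_edgeSet] at h₁ h₂ h₃ h₄
  have hv : ∀ v : V, _ := fun v => DFunLike.congr_fun h (some v)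
  simp only [Finsupp.add_apply, edgeExponent_some] at hv
  have ha := hv a
  have hb := hv b
  have hc := hv c
  have hd := hv d
  have n1 := h₁.ne
  have n2 := h₂.ne
  have n3 := h₃.ne
  have n4 := h₄.ne
  have hcases : a ≠ d ∧ b ≠ c ∧ G.Adj a c ∧ G.Adj b d ∨
      a ≠ c ∧ b ≠ d ∧ G.Adj a d ∧ G.Adj b c := by
    have s3 := h₃.symm
    have s4 := h₄.symm
    simp only [Sym2.eq_iff] at hne hne'
    clear h hv
    have ha' : x = a ∨ y = a ∨ z = a ∨ w = a := by grind
    have hd' : x = d ∨ y = d ∨ z = d ∨ w = d := by grind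
    rcases ha' with rfl | rfl | rfl | rfl <;> rcases hd' with rfl | rfl | rfl | rfl <;>
      simp_all <;> grind (splits := 20)
  rcases hcases with ⟨had, hbc, hac, hbd⟩ | ⟨hac, hbd, had, hbc⟩
  · exact exists_isCycle_length_four h₁ hbd h₂.symm hac.symm had hbc
  · exact exists_isCycle_length_four h₁ hbc h₂ had.symm hac hbd

/-- A finite connected simple graph `G` has a `4`-cycle if and only if
its toric ideal `I_G` contains a nonzero homogeneous polynomial of degree `2`. -/
theorem has_four_cycle_iff_toricIdeal_quadric
    {N : ℕ} (K : Type*) [Field K] (G : SimpleGraph (Fin N)) (hG : G.Connected) :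
    (∃ (v : Fin N) (w : G.Walk v v), w.IsCycle ∧ w.length = 4) ↔
      ∃ f : MvPolynomial G.edgeSet K,
        f ∈ toricIdeal K G ∧ f ≠ 0 ∧ f.IsHomogeneous 2 := by
  constructor
  · rintro ⟨a, w, hw, hlen⟩
    match w, hw, hlen with
    | .cons (v := b) hab (.cons (v := c) hbc (.cons (v := d) hcd (.cons hda .nil))), hw, _ =>
    have hnodup := hw.edges_nodup
    simp only [SimpleGraph.Walk.edges_cons, SimpleGraph.Walk.edges_nil, List.nodup_cons,
      List.mem_cons, not_or] at hnodup
    obtain ⟨⟨hne₂, -, hne₄, -⟩, -⟩ := hnodup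
    refine ⟨X ⟨s(a, b), hab⟩ * X ⟨s(c, d), hcd⟩ - X ⟨s(b, c), hbc⟩ * X ⟨s(d, a), hda⟩,
      ?_, ?_, ?_⟩
    · rw [toricIdeal, RingHom.mem_ker]
      simp only [map_sub, map_mul, aeval_X, edgeMonom, Sym2.lift_mk]
      ring
    · intro h
      have := congrArg (eval fun e : G.edgeSet => if (e : Sym2 (Fin N)) = s(a, b) then (0 : K)
        else 1) h
      simp only [map_sub, map_mul, eval_X, if_true, if_neg (Ne.symm hne₂), if_neg (Ne.symm hne₄),
        map_zero] at this
      simp at this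
    · exact ((isHomogeneous_X _ _).mul (isHomogeneous_X _ _)).sub
        ((isHomogeneous_X _ _).mul (isHomogeneous_X _ _))
  · rintro ⟨f, hf, hf0, hhom⟩
    rw [toricIdeal, RingHom.mem_ker] at hf
    simp only [edgeMonom_eq_monomial] at hf
    obtain ⟨m, hm, m', hm', hne, heq⟩ :=
      exists_ne_mem_support_of_aeval_monomial_eq_zero
        (fun e : G.edgeSet => edgeExponent (e : Sym2 (Fin N))) hf0 hf
    have hdeg : ∀ n ∈ f.support, n.degree = 2 := fun n hn => by
      rw [Finsupp.degree_eq_weight_one]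
      exact hhom (mem_support_iff.mp hn)
    obtain ⟨e₁, e₂, rfl⟩ := Finsupp.exists_single_add_single_of_degree_eq_two (hdeg m hm)
    obtain ⟨e₃, e₄, rfl⟩ := Finsupp.exists_single_add_single_of_degree_eq_two (hdeg m' hm')
    rw [Finsupp.sum_add_index' (by simp) (by simp [add_smul]),
      Finsupp.sum_add_index' (by simp) (by simp [add_smul])] at heq
    simp only [zero_smul, Finsupp.sum_single_index, one_smul] at heq
    refine SimpleGraph.exists_isCycle_length_four_of_edgeExponent_add_eq
      e₁.2 e₂.2 e₃.2 e₄.2 heq ?_ ?_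
    · rintro ⟨h, h'⟩
      exact hne (by rw [Subtype.ext h, Subtype.ext h'])
    · rintro ⟨h, h'⟩
      exact hne (by rw [Subtype.ext h, Subtype.ext h', add_comm])
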